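/- Let (Σ₀, R) be a string rewriting system. Every overlapping local branching (f, g) can be written as (u·f'·v, u·g'·v) for some critical branching (f', g') and some words u, v ∈ Σ₀*. -/

import Mathlib

open Relation

/-- A rewriting step `(u, r, v)` of a string rewriting system `R` over the free monoid on `α`:
`u` and `v` are the context words and `r = (a, b)` is a rule of `R`. -/
structure Step {α : Type*} (R : Set (FreeMonoid α × FreeMonoid α)) where
  left : FreeMonoid α
  rule : FreeMonoid α × FreeMonoid α
  right : FreeMonoid α
  rule_mem : rule ∈ R

namespace Step

variable {α : Type*} {R : Set (FreeMonoid α × FreeMonoid α)}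

/-- The source `u·a·v` of the rewriting step `(u, (a,b), v)`. -/
def src (f : Step R) : FreeMonoid α := f.left * f.rule.1 * f.right

/-- The target `u·b·v` of the rewriting step `(u, (a,b), v)`. -/
def tgt (f : Step R) : FreeMonoid α := f.left * f.rule.2 * f.right

/-- The whiskered step `u·(p, r, q)·v = (u·p, r, q·v)`. -/
def whisker (u : FreeMonoid α) (f : Step R) (v : FreeMonoid α) : Step R :=
  ⟨u * f.left, f.rule, f.right * v, f.rule_mem⟩

end Step

/-- The one-step rewriting relation `→_R`. -/
def RwStep {α : Type*} (R : Set (FreeMonoid α × FreeMonoid α)) (x y : FreeMonoid α) : Prop :=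
  ∃ f : Step R, f.src = x ∧ f.tgt = y

/-- Two words are joinable if they have a common reduct under `→*_R`. -/
def Joinable {α : Type*} (R : Set (FreeMonoid α × FreeMonoid α)) (y z : FreeMonoid α) : Prop :=
  ∃ w, ReflTransGen (RwStep R) y w ∧ ReflTransGen (RwStep R) z w

/-- `(f, g)` is a Peiffer branching in the given order: the common source factors as
`u·a·v·b·w` with `f = (u, (a,a'), v·b·w)` and `g = (u·a·v, (b,b'), w)`. -/
def PeifferOriented {α : Type*} {R : Set (FreeMonoid α × FreeMonoid α)}
    (f g : Step R) : Prop :=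
  ∃ v : FreeMonoid α, g.left = f.left * f.rule.1 * v ∧ f.right = v * g.rule.1 * g.right

/-- A Peiffer branching, up to permutation of the two steps. -/
def Peiffer {α : Type*} {R : Set (FreeMonoid α × FreeMonoid α)} (f g : Step R) : Prop :=
  PeifferOriented f g ∨ PeifferOriented g f

/-- An overlapping branching: a local branching that is neither aspherical nor Peiffer. -/
def Overlapping {α : Type*} {R : Set (FreeMonoid α × FreeMonoid α)} (f g : Step R) : Prop :=
  f.src = g.src ∧ f ≠ g ∧ ¬ Peiffer f g

/-- The order on local branchings generated by `(f, g) ≤ (u·f·v, u·g·v)`. -/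
def BranchLE {α : Type*} {R : Set (FreeMonoid α × FreeMonoid α)}
    (p q : Step R × Step R) : Prop :=
  ∃ u v : FreeMonoid α, q.1 = Step.whisker u p.1 v ∧ q.2 = Step.whisker u p.2 v

/-- A critical branching: an overlapping branching that is minimal for the order `BranchLE`. -/
def Critical {α : Type*} {R : Set (FreeMonoid α × FreeMonoid α)} (f g : Step R) : Prop :=
  Overlapping f g ∧
    ∀ f' g' : Step R, Overlapping f' g' → BranchLE (f', g') (f, g) → (f', g') = (f, g)

/-!
Whiskering by `u` and `v` lengthens the source of a step by `|u| + |v|`, so a branching strictly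
below another has a strictly shorter source. Among the overlapping branchings below `(f, g)`, one
with shortest source is therefore minimal, that is, critical.
-/

namespace Step

variable {α : Type*} {R : Set (FreeMonoid α × FreeMonoid α)}

@[simp]
theorem whisker_one_one (f : Step R) : whisker 1 f 1 = f := by
  simp [whisker]

@[simp]
theorem whisker_whisker (u v u' v' : FreeMonoid α) (f : Step R) :
    whisker u (whisker u' f v') v = whisker (u * u') f (v' * v) := by
  simp [whisker, mul_assoc]

theorem src_whisker (u v : FreeMonoid α) (f : Step R) :
    (whisker u f v).src = u * f.src * v := by
  simp [whisker, src, mul_assoc]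

theorem length_src_whisker (u v : FreeMonoid α) (f : Step R) :
    (whisker u f v).src.length = u.length + f.src.length + v.length := by
  simp [src_whisker]

end Step

namespace BranchLE

variable {α : Type*} {R : Set (FreeMonoid α × FreeMonoid α)} {p q r : Step R × Step R}

protected theorem refl (p : Step R × Step R) : BranchLE p p :=
  ⟨1, 1, by simp, by simp⟩

protected theorem trans (hpq : BranchLE p q) (hqr : BranchLE q r) : BranchLE p r := by
  obtain ⟨u', v', hq₁, hq₂⟩ := hpq
  obtain ⟨u, v, hr₁, hr₂⟩ := hqr
  exact ⟨u * u', v' * v, by simp [hr₁, hq₁], by simp [hr₂, hq₂]⟩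

theorem length_src_le (hpq : BranchLE p q) : p.1.src.length ≤ q.1.src.length := by
  obtain ⟨u, v, hq₁, -⟩ := hpq
  rw [hq₁, Step.length_src_whisker]
  lia

theorem eq_of_length_src_le (hpq : BranchLE p q)
    (hlen : q.1.src.length ≤ p.1.src.length) : p = q := by
  obtain ⟨u, v, hq₁, hq₂⟩ := hpq
  rw [hq₁, Step.length_src_whisker] at hlen
  obtain rfl : u = 1 := FreeMonoid.length_eq_zero.mp (by lia)
  obtain rfl : v = 1 := FreeMonoid.length_eq_zero.mp (by lia)
  exact Prod.ext (by simp [hq₁]) (by simp [hq₂])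

theorem exists_minimal_le (P : Step R × Step R → Prop) (hp : P p) :
    ∃ q, BranchLE q p ∧ P q ∧ ∀ q', P q' → BranchLE q' q → q' = q := by
  obtain ⟨q, ⟨hqp, hq⟩, hmin⟩ := exists_minimalFor_of_wellFoundedLT
    (fun q ↦ BranchLE q p ∧ P q) (fun q ↦ q.1.src.length) ⟨p, BranchLE.refl p, hp⟩
  refine ⟨q, hqp, hq, fun q' hq' hle ↦ hle.eq_of_length_src_le ?_⟩
  exact hmin ⟨hle.trans hqp, hq'⟩ hle.length_src_le

end BranchLE

/-- Every overlapping local branching is the whiskering `(u·f'·v, u·g'·v)`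
of some critical branching `(f', g')`. -/
theorem overlapping_factors_through_critical {α : Type*}
    (R : Set (FreeMonoid α × FreeMonoid α)) (f g : Step R) (h : Overlapping f g) :
    ∃ (f' g' : Step R) (u v : FreeMonoid α), Critical f' g' ∧
      f = Step.whisker u f' v ∧ g = Step.whisker u g' v := by
  obtain ⟨⟨f', g'⟩, ⟨u, v, hf, hg⟩, hoverlap, hmin⟩ :=
    BranchLE.exists_minimal_le (fun p ↦ Overlapping p.1 p.2) (p := (f, g)) h
  have hcritical : Critical f' g' := ⟨hoverlap, fun f'' g'' ↦ hmin (f'', g'')⟩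
  exact ⟨f', g', u, v, hcritical, hf, hg⟩
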